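/- There is a constant c such that the following holds. Suppose q∈{1,…,r}, i_{t_q}∈B_1∪{1}, and i_{t_q}∉B⁺∖B; let N_q=|S_{t_q}^B(C)|. Then there is a regular dag-like resolution derivation from Stone(G,m) of size at most c·N_q which contains, for every i_ℓ∈S_{t_q}^B(C) with i_ℓ∉B⁺, the clause C_ℓ∨E_ℓ∨r_{j_ℓ}, and in which the subderivation of this clause uses as resolution variables exactly the variables r_{j_{ℓ′}} such that j_{ℓ′}≠j_ℓ, i_{ℓ′}∈S_ℓ^B(C), and i_{ℓ′}∉B⁺. -/

import Mathlib

open scoped Classical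

/-! ### Clauses and literals -/

abbrev Lit (V : Type) := V × Bool
abbrev Clause (V : Type) := Finset (V × Bool)

/-- Propositional variables for the Stone principle: `p i j` and `r j`. -/
inductive SV where
  | p (i j : ℕ) : SV
  | r (j : ℕ) : SV
deriving DecidableEq

/-- A dag on vertices `1,…,N` with unique sink `1`, in which every non-source vertex
(the vertices `1,…,n`) has exactly the two predecessors `p1 i` and `p2 i`,
every edge `(i′,i)` satisfies `i′ > i`, and the sources are exactly `n+1,…,N`. -/
structure StoneDag where
  N : ℕ
  n : ℕ
  p1 : ℕ → ℕ
  p2 : ℕ → ℕ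
  n_lt_N : n < N
  p1_gt : ∀ i, 1 ≤ i → i ≤ n → i < p1 i
  p2_gt : ∀ i, 1 ≤ i → i ≤ n → i < p2 i
  p1_le : ∀ i, 1 ≤ i → i ≤ n → p1 i ≤ N
  p2_le : ∀ i, 1 ≤ i → i ≤ n → p2 i ≤ N
  p_ne : ∀ i, 1 ≤ i → i ≤ n → p1 i ≠ p2 i
  unique_sink : ∀ i, 2 ≤ i → i ≤ N → ∃ v, 1 ≤ v ∧ v ≤ n ∧ (p1 v = i ∨ p2 v = i)

/-- The clause set `Stone(G,m)`. -/
def stoneClauses (G : StoneDag) (m : ℕ) : Set (Clause SV) :=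
  { C | ∃ i, 1 ≤ i ∧ i ≤ G.N ∧
      C = (Finset.Icc 1 m).image (fun j => ((SV.p i j, true) : Lit SV)) } ∪
  { C | ∃ i j, G.n < i ∧ i ≤ G.N ∧ 1 ≤ j ∧ j ≤ m ∧
      C = {(SV.p i j, false), (SV.r j, true)} } ∪
  { C | ∃ j, 1 ≤ j ∧ j ≤ m ∧ C = {(SV.p 1 j, false), (SV.r j, false)} } ∪
  { C | ∃ i j j' j'', 1 ≤ i ∧ i ≤ G.n ∧ 1 ≤ j ∧ j ≤ m ∧ 1 ≤ j' ∧ j' ≤ m ∧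
      1 ≤ j'' ∧ j'' ≤ m ∧ j ≠ j' ∧ j ≠ j'' ∧
      C = {(SV.p (G.p1 i) j', false), (SV.r j', false),
           (SV.p (G.p2 i) j'', false), (SV.r j'', false),
           (SV.p i j, false), (SV.r j, true)} }

/-! ### Resolution inference rules -/

/-- `(A ∖ {x}) ∪ (B ∖ {¬x})`. -/
def wres {V : Type} [DecidableEq V] (x : V) (A B : Clause V) : Clause V :=
  A.erase (x, true) ∪ B.erase (x, false)

/-- w-resolution inference. -/
def wstep {V : Type} [DecidableEq V] (x : V) (A B C : Clause V) : Prop :=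
  C = wres x A B

/-- ordinary resolution inference. -/
def rstep {V : Type} [DecidableEq V] (x : V) (A B C : Clause V) : Prop :=
  (x, true) ∈ A ∧ (x, false) ∈ B ∧ C = wres x A B

/-- degenerate resolution inference. -/
def dstep {V : Type} [DecidableEq V] (x : V) (A B C : Clause V) : Prop :=
  ((x, true) ∈ A ∧ (x, false) ∈ B ∧ C = wres x A B) ∨
  ((x, true) ∈ A ∧ (x, false) ∉ B ∧ C = B) ∨
  ((x, true) ∉ A ∧ (x, false) ∈ B ∧ C = A) ∨
  ((x, true) ∉ A ∧ (x, false) ∉ B ∧ (C = A ∨ C = B))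

/-! ### Tree-like proofs -/

/-- Binary proof trees: each node is labeled with a clause, internal nodes also
with a resolution variable. -/
inductive PTree (V : Type) [DecidableEq V] where
  | leaf : Clause V → PTree V
  | node : Clause V → V → PTree V → PTree V → PTree V

namespace PTree

variable {V : Type} [DecidableEq V]

/-- The clause labeling the root. -/
def clause : PTree V → Clause V
  | leaf c => c
  | node c _ _ _ => c

/-- Number of nodes. -/
def size : PTree V → ℕ
  | leaf _ => 1
  | node _ _ t1 t2 => t1.size + t2.size + 1

/-- The set of variables used as resolution variables. -/
def resVars : PTree V → Finset V
  | leaf _ => ∅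
  | node _ x t1 t2 => insert x (t1.resVars ∪ t2.resVars)

/-- No variable is used as a resolution variable more than once on any
root-to-leaf path. -/
def regular : PTree V → Prop
  | leaf _ => True
  | node _ x t1 t2 => x ∉ t1.resVars ∧ x ∉ t2.resVars ∧ t1.regular ∧ t2.regular

/-- Every internal node is obtained from its children by the inference `step`. -/
def wf (step : V → Clause V → Clause V → Clause V → Prop) : PTree V → Prop
  | leaf _ => True
  | node c x t1 t2 => step x t1.clause t2.clause c ∧ t1.wf step ∧ t2.wf step

/-- All clauses occurring in the tree. -/
def clauses : PTree V → Set (Clause V)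
  | leaf c => {c}
  | node c _ t1 t2 => t1.clauses ∪ t2.clauses ∪ {c}

/-- Every leaf is labeled by a clause of `Γ` or by a clause occurring strictly
earlier in postorder; `S` is the set of clauses occurring before this subtree. -/
def lemmasOK (Γ : Set (Clause V)) : PTree V → Set (Clause V) → Prop
  | leaf c, S => c ∈ Γ ∨ c ∈ S
  | node _ _ t1 t2, S => t1.lemmasOK Γ S ∧ t2.lemmasOK Γ (S ∪ t1.clauses)

/-- Every leaf is labeled by a clause of `Γ`. -/
def leavesIn (Γ : Set (Clause V)) : PTree V → Prop
  | leaf c => c ∈ Γ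
  | node _ _ t1 t2 => t1.leavesIn Γ ∧ t2.leavesIn Γ

/-- Postorder scan computing, from the set `L` of clauses learned so far
(initially `Γ`), the pair of (i) the set of clauses learned after traversing the
subtree — a clause becomes learned when it is the final clause of an input
subderivation, i.e. a subderivation each of whose inferences has at least one
hypothesis that is already learned — and (ii) whether this subtree is an input
subderivation. -/
def scan : PTree V → Set (Clause V) → Set (Clause V) × Prop
  | leaf _, L => (L, True)
  | node c _ t1 t2, L =>
      let r1 := t1.scan L
      let r2 := t2.scan r1.1
      let inp : Prop := r1.2 ∧ r2.2 ∧ (t1.clause ∈ r1.1 ∨ t2.clause ∈ r2.1)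
      ({ d | d ∈ r2.1 ∨ (inp ∧ d = c) }, inp)

/-- Every leaf is labeled by a learned clause (a clause of the initial set `L`,
or one derived by an input subderivation strictly earlier in postorder). -/
def lemOK : PTree V → Set (Clause V) → Prop
  | leaf c, L => c ∈ L
  | node _ _ t1 t2, L => t1.lemOK L ∧ t2.lemOK (t1.scan L).1

end PTree

/-- regWRTL refutation of `Γ`. -/
def RegWRTLRefutation {V : Type} [DecidableEq V] (Γ : Set (Clause V)) (T : PTree V) : Prop :=
  T.clause = ∅ ∧ T.wf wstep ∧ T.regular ∧ T.lemmasOK Γ ∅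

/-- pool resolution refutation of `Γ`. -/
def PoolRefutation {V : Type} [DecidableEq V] (Γ : Set (Clause V)) (T : PTree V) : Prop :=
  T.clause = ∅ ∧ T.wf dstep ∧ T.regular ∧ T.lemmasOK Γ ∅

/-- regRTL refutation of `Γ`. -/
def RegRTLRefutation {V : Type} [DecidableEq V] (Γ : Set (Clause V)) (T : PTree V) : Prop :=
  T.clause = ∅ ∧ T.wf rstep ∧ T.regular ∧ T.lemmasOK Γ ∅

/-- regRTI refutation of `Γ`: all lemmas are input lemmas. -/
def RegRTIRefutation {V : Type} [DecidableEq V] (Γ : Set (Clause V)) (T : PTree V) : Prop :=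
  T.clause = ∅ ∧ T.wf rstep ∧ T.regular ∧ T.lemOK Γ

/-- regRTI derivation of the clause `D` from `Γ`. -/
def RegRTIDeriv {V : Type} [DecidableEq V] (Γ : Set (Clause V)) (D : Clause V)
    (T : PTree V) : Prop :=
  T.clause = D ∧ T.wf rstep ∧ T.regular ∧ T.lemOK Γ ∧
  ∀ x ∈ T.resVars, (x, true) ∉ D ∧ (x, false) ∉ D

/-- regular tree-like resolution derivation of the clause `D` from `Γ`. -/
def RegTreeDeriv {V : Type} [DecidableEq V] (Γ : Set (Clause V)) (D : Clause V)
    (T : PTree V) : Prop :=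
  T.clause = D ∧ T.wf rstep ∧ T.regular ∧ T.leavesIn Γ ∧
  ∀ x ∈ T.resVars, (x, true) ∉ D ∧ (x, false) ∉ D

/-! ### Dag-like derivations -/

/-- A dag-like resolution derivation: a sequence of `len` clauses, each an
axiom (`just i = none`) or obtained by resolution from two earlier clauses. -/
structure DagDeriv (V : Type) [DecidableEq V] where
  len : ℕ
  cl : ℕ → Clause V
  just : ℕ → Option (ℕ × ℕ × V)

namespace DagDeriv

variable {V : Type} [DecidableEq V]

/-- Validity relative to the initial clause set `Γ`. -/
def ok (D : DagDeriv V) (Γ : Set (Clause V)) : Prop :=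
  ∀ i, i < D.len →
    match D.just i with
    | none => D.cl i ∈ Γ
    | some (a, b, x) => a < i ∧ b < i ∧ rstep x (D.cl a) (D.cl b) (D.cl i)

/-- `j` is a premise of `i`. -/
def prem (D : DagDeriv V) (i j : ℕ) : Prop :=
  ∃ a b x, D.just i = some (a, b, x) ∧ (j = a ∨ j = b)

/-- `j` lies in the subderivation of `i` (is reachable from `i` in the dag). -/
def reach (D : DagDeriv V) : ℕ → ℕ → Prop := Relation.ReflTransGen D.prem

/-- `x` is the resolution variable of the inference at `i`. -/
def resAt (D : DagDeriv V) (i : ℕ) (x : V) : Prop := ∃ a b, D.just i = some (a, b, x)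

/-- No variable is used as resolution variable twice along a path of the dag. -/
def regular (D : DagDeriv V) : Prop :=
  ∀ i a b x, D.just i = some (a, b, x) →
    ∀ j, (D.reach a j ∨ D.reach b j) → ¬ D.resAt j x

/-- The subderivation of `i` uses `x` as a resolution variable. -/
def usesVar (D : DagDeriv V) (i : ℕ) (x : V) : Prop := ∃ j, D.reach i j ∧ D.resAt j x

end DagDeriv

/-! ### Supports, bypassing, and the sets `B`, `B⁺`, `S_ℓ^B(C)` for a clause
`C = ¬p_{i_1,j_1} ∨ … ∨ ¬p_{i_k,j_k}` given by `k` and the functions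
`I J : ℕ → ℕ` (with `I ℓ = i_ℓ`, `J ℓ = j_ℓ` for `1 ≤ ℓ ≤ k`). -/

/-- Index `ℓ` is bypassed. -/
def bypassed (k : ℕ) (J : ℕ → ℕ) (ℓ : ℕ) : Prop :=
  ∃ ℓ', ℓ < ℓ' ∧ ℓ' ≤ k ∧ J ℓ' = J ℓ

/-- `ℓ'` is the max-bypasser of `ℓ`. -/
def maxByp (k : ℕ) (J : ℕ → ℕ) (ℓ ℓ' : ℕ) : Prop :=
  ℓ < ℓ' ∧ ℓ' ≤ k ∧ J ℓ' = J ℓ ∧ ∀ a, ℓ < a → a ≤ k → J a = J ℓ → a ≤ ℓ'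

/-- `i_{ℓ'}` directly supports `i_ℓ`. -/
def dsup (G : StoneDag) (k : ℕ) (I J : ℕ → ℕ) (ℓ' ℓ : ℕ) : Prop :=
  1 ≤ ℓ ∧ ℓ < ℓ' ∧ ℓ' ≤ k ∧
  (maxByp k J ℓ ℓ' ∨
    (¬ bypassed k J ℓ ∧ (I ℓ' = G.p1 (I ℓ) ∨ I ℓ' = G.p2 (I ℓ))))

/-- `i_a` supports `i_b`: reflexive transitive closure of direct support. -/
def supp (G : StoneDag) (k : ℕ) (I J : ℕ → ℕ) : ℕ → ℕ → Prop :=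
  Relation.ReflTransGen (dsup G k I J)

/-- `dom(C)` as a set of vertices. -/
def domv (k : ℕ) (I : ℕ → ℕ) : Set ℕ := { v | ∃ a, 1 ≤ a ∧ a ≤ k ∧ I a = v }

/-- `S_ℓ(C)`: the set of vertices of `dom(C)` supporting `i_ℓ`. -/
def suppSet (G : StoneDag) (k : ℕ) (I J : ℕ → ℕ) (ℓ : ℕ) : Set ℕ :=
  { v | ∃ a, 1 ≤ a ∧ a ≤ k ∧ I a = v ∧ supp G k I J a ℓ }

/-- `i_ℓ ∈ B`: not bypassed and some predecessor outside `dom(C)`. -/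
def Bidx (G : StoneDag) (k : ℕ) (I J : ℕ → ℕ) (ℓ : ℕ) : Prop :=
  1 ≤ ℓ ∧ ℓ ≤ k ∧ ¬ bypassed k J ℓ ∧
  (G.p1 (I ℓ) ∉ domv k I ∨ G.p2 (I ℓ) ∉ domv k I)

/-- `i_ℓ ∈ B₁`: exactly one predecessor outside `dom(C)`. -/
def B1idx (G : StoneDag) (k : ℕ) (I J : ℕ → ℕ) (ℓ : ℕ) : Prop :=
  Bidx G k I J ℓ ∧ (G.p1 (I ℓ) ∈ domv k I ∨ G.p2 (I ℓ) ∈ domv k I)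

/-- `i_ℓ ∈ B₂`: both predecessors outside `dom(C)`. -/
def B2idx (G : StoneDag) (k : ℕ) (I J : ℕ → ℕ) (ℓ : ℕ) : Prop :=
  1 ≤ ℓ ∧ ℓ ≤ k ∧ ¬ bypassed k J ℓ ∧
  G.p1 (I ℓ) ∉ domv k I ∧ G.p2 (I ℓ) ∉ domv k I

/-- `i_ℓ ∈ B⁺`: in `B`, or bypassed with max-bypasser in `B`. -/
def Bplus (G : StoneDag) (k : ℕ) (I J : ℕ → ℕ) (ℓ : ℕ) : Prop :=
  Bidx G k I J ℓ ∨ (1 ≤ ℓ ∧ ℓ ≤ k ∧ ∃ ℓ', maxByp k J ℓ ℓ' ∧ Bidx G k I J ℓ')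

/-- Membership in `S_ℓ^B(C)` (on indices). -/
inductive SBmem (G : StoneDag) (k : ℕ) (I J : ℕ → ℕ) (ℓ : ℕ) : ℕ → Prop where
  | base : SBmem G k I J ℓ ℓ
  | byp (a b : ℕ) : SBmem G k I J ℓ a → (a = ℓ ∨ ¬ Bidx G k I J a) →
      maxByp k J a b → ¬ Bidx G k I J b → SBmem G k I J ℓ b
  | pred (a b : ℕ) : SBmem G k I J ℓ a → (a = ℓ ∨ ¬ Bidx G k I J a) →
      ¬ bypassed k J a → 1 ≤ b → b ≤ k →
      (I b = G.p1 (I a) ∨ I b = G.p2 (I a)) → SBmem G k I J ℓ b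

/-- The clause `C_ℓ`. -/
noncomputable def Clc (G : StoneDag) (k : ℕ) (I J : ℕ → ℕ) (ℓ : ℕ) : Clause SV :=
  ((Finset.Icc 1 k).filter fun a =>
      SBmem G k I J ℓ a ∧ ¬(a = ℓ ∧ bypassed k J ℓ)).image
    fun a => ((SV.p (I a) (J a), false) : Lit SV)

/-- The clause `E_ℓ`. -/
noncomputable def Elc (G : StoneDag) (k : ℕ) (I J : ℕ → ℕ) (ℓ : ℕ) : Clause SV :=
  ((Finset.Icc 1 k).filter fun a =>
      SBmem G k I J ℓ a ∧ Bplus G k I J a ∧ (Bidx G k I J ℓ → a ≠ ℓ)).image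
    fun a => ((SV.r (J a), false) : Lit SV)

/-- `t_1,…,t_r` enumerates the indices of `B ∪ {1}` in decreasing order. -/
def EnumB (G : StoneDag) (k : ℕ) (I J : ℕ → ℕ) (r : ℕ) (t : ℕ → ℕ) : Prop :=
  (∀ q, 1 ≤ q → q ≤ r → (Bidx G k I J (t q) ∨ t q = 1)) ∧
  (∀ q q', 1 ≤ q → q < q' → q' ≤ r → t q' < t q) ∧
  (∀ ℓ, Bidx G k I J ℓ ∨ ℓ = 1 → ∃ q, 1 ≤ q ∧ q ≤ r ∧ t q = ℓ)

/-- The clause `F_q`. -/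
noncomputable def Fcl (G : StoneDag) (k : ℕ) (I J : ℕ → ℕ) (r : ℕ) (t : ℕ → ℕ)
    (q : ℕ) : Clause SV :=
  if q = r ∧ ¬ Bidx G k I J 1 then Elc G k I J 1
  else (Finset.Icc 1 (q - 1)).image fun q' => ((SV.r (J (t q')), false) : Lit SV)

/-- The standing hypotheses on the clause `C`: `k ≥ 1`, `1 = i_1 < … < i_k ≤ n`,
`j_ℓ ∈ {1,…,m}`, and every vertex of `dom(C)` supports vertex `1`. -/
def GoodC (G : StoneDag) (m k : ℕ) (I J : ℕ → ℕ) : Prop :=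
  1 ≤ k ∧ I 1 = 1 ∧ I k ≤ G.n ∧
  (∀ a b, 1 ≤ a → a < b → b ≤ k → I a < I b) ∧
  (∀ a, 1 ≤ a → a ≤ k → 1 ≤ J a ∧ J a ≤ m) ∧
  (∀ a, 1 ≤ a → a ≤ k → supp G k I J a 1)

/-! ### Extending dag-like derivations -/

namespace DagDeriv

variable {V : Type} [DecidableEq V]

/-- A regular derivation from `Γ` with no inferences recorded beyond its length. -/
structure Sound (Γ : Set (Clause V)) (D : DagDeriv V) : Prop where
  ok : D.ok Γ
  regular : D.regular
  just_none : ∀ i, D.len ≤ i → D.just i = none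

/-- `D` contains the clause `C`, with a subderivation resolving exactly on the variables `W`. -/
def Derives (D : DagDeriv V) (C : Clause V) (W : Set V) : Prop :=
  ∃ idx, idx < D.len ∧ D.cl idx = C ∧ ∀ x, D.usesVar idx x ↔ x ∈ W

/-- Every clause derived by `D` is derived by `D'`, with the same resolution variables. -/
def Extends (D' D : DagDeriv V) : Prop := ∀ C W, D.Derives C W → D'.Derives C W

/-- Append one clause. -/
def snoc (D : DagDeriv V) (C : Clause V) (w : Option (ℕ × ℕ × V)) : DagDeriv V where
  len := D.len + 1
  cl := Function.update D.cl D.len C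
  just := Function.update D.just D.len w

theorem lt_of_prem {Γ : Set (Clause V)} {D : DagDeriv V} (hok : D.ok Γ)
    (hn : ∀ i, D.len ≤ i → D.just i = none) {i j : ℕ} (h : D.prem i j) : j < i := by
  obtain ⟨a, b, x, hj, hab⟩ := h
  have hi : i < D.len := by
    by_contra hi
    simp [hn i (not_lt.mp hi)] at hj
  have := hok i hi
  rw [hj] at this
  obtain ⟨h1, h2, -⟩ := this
  rcases hab with rfl | rfl <;> assumption

theorem le_of_reach {D : DagDeriv V} (hD : ∀ i j, D.prem i j → j < i) {i j : ℕ}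
    (h : D.reach i j) : j ≤ i := by
  induction h with
  | refl => exact le_rfl
  | tail _ h ih => exact (hD _ _ h).le.trans ih

theorem reach_of_agree {D D' : DagDeriv V} (hD : ∀ i j, D.prem i j → j < i) {n : ℕ}
    (hag : ∀ i, i < n → D.just i = D'.just i) {i j : ℕ} (hi : i < n)
    (h : D.reach i j) : D'.reach i j := by
  induction h with
  | refl => exact Relation.ReflTransGen.refl
  | @tail b c hb hbc ih =>
    refine ih.tail ?_
    obtain ⟨a, b', x, hj, hc⟩ := hbc
    exact ⟨a, b', x, by rw [← hag b ((le_of_reach hD hb).trans_lt hi)]; exact hj, hc⟩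

theorem usesVar_of_agree {D D' : DagDeriv V} (hD : ∀ i j, D.prem i j → j < i) {n : ℕ}
    (hag : ∀ i, i < n → D.just i = D'.just i) {i : ℕ} {x : V} (hi : i < n)
    (h : D.usesVar i x) : D'.usesVar i x := by
  obtain ⟨j, hj, a, b, hab⟩ := h
  exact ⟨j, reach_of_agree hD hag hi hj, a, b, by
    rw [← hag j ((le_of_reach hD hj).trans_lt hi)]; exact hab⟩

theorem usesVar_iff {D : DagDeriv V} {i : ℕ} {y : V} :
    D.usesVar i y ↔ ∃ a b x, D.just i = some (a, b, x) ∧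
      (y = x ∨ D.usesVar a y ∨ D.usesVar b y) := by
  constructor
  · rintro ⟨j, hj, hy⟩
    rcases Relation.ReflTransGen.cases_head hj with rfl | ⟨c, ⟨a, b, x, hab, hc⟩, hcj⟩
    · obtain ⟨a, b, hab⟩ := hy
      exact ⟨a, b, y, hab, Or.inl rfl⟩
    · refine ⟨a, b, x, hab, Or.inr ?_⟩
      rcases hc with rfl | rfl
      · exact Or.inl ⟨j, hcj, hy⟩
      · exact Or.inr ⟨j, hcj, hy⟩
  · rintro ⟨a, b, x, hab, rfl | ⟨j, hj, hy⟩ | ⟨j, hj, hy⟩⟩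
    · exact ⟨i, Relation.ReflTransGen.refl, a, b, hab⟩
    · exact ⟨j, Relation.ReflTransGen.head ⟨a, b, x, hab, Or.inl rfl⟩ hj, hy⟩
    · exact ⟨j, Relation.ReflTransGen.head ⟨a, b, x, hab, Or.inr rfl⟩ hj, hy⟩

theorem regular_iff {D : DagDeriv V} :
    D.regular ↔ ∀ i a b x, D.just i = some (a, b, x) → ¬ D.usesVar a x ∧ ¬ D.usesVar b x := by
  constructor
  · intro h i a b x hj
    exact ⟨fun ⟨j, hr, hy⟩ => h i a b x hj j (Or.inl hr) hy,
      fun ⟨j, hr, hy⟩ => h i a b x hj j (Or.inr hr) hy⟩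
  · rintro h i a b x hj j (hr | hr) hy
    · exact (h i a b x hj).1 ⟨j, hr, hy⟩
    · exact (h i a b x hj).2 ⟨j, hr, hy⟩

/-- Appending a justified clause preserves soundness. -/
theorem Sound.snoc {Γ : Set (Clause V)} {D : DagDeriv V} (hD : D.Sound Γ) {C : Clause V}
    {w : Option (ℕ × ℕ × V)} (hnone : w = none → C ∈ Γ)
    (hsome : ∀ a b x, w = some (a, b, x) → a < D.len ∧ b < D.len ∧
      rstep x (D.cl a) (D.cl b) C ∧ ¬ D.usesVar a x ∧ ¬ D.usesVar b x) :
    (D.snoc C w).Sound Γ ∧ (D.snoc C w).Extends D ∧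
      ∀ i < D.len, ∀ x, (D.snoc C w).usesVar i x ↔ D.usesVar i x := by
  have hag : ∀ i, i < D.len → D.just i = (D.snoc C w).just i := fun i hi => by
    simp [DagDeriv.snoc, Function.update_of_ne hi.ne]
  have hcl : ∀ i, i < D.len → (D.snoc C w).cl i = D.cl i := fun i hi => by
    simp [DagDeriv.snoc, Function.update_of_ne hi.ne]
  have hjl : (D.snoc C w).just D.len = w := by simp [DagDeriv.snoc]
  have hcll : (D.snoc C w).cl D.len = C := by simp [DagDeriv.snoc]
  have hok : (D.snoc C w).ok Γ := by
    intro i hi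
    rcases Nat.lt_succ_iff_lt_or_eq.mp hi with h | rfl
    · rw [← hag i h, hcl i h]
      have := hD.ok i h
      rcases hj : D.just i with _ | ⟨a, b, x⟩
      · simpa [hj] using this
      · rw [hj] at this
        obtain ⟨h1, h2, h3⟩ := this
        refine ⟨h1, h2, ?_⟩
        rwa [hcl a (h1.trans h), hcl b (h2.trans h)]
    · rw [hjl, hcll]
      rcases w with _ | ⟨a, b, x⟩
      · exact hnone rfl
      · obtain ⟨h1, h2, h3, -⟩ := hsome a b x rfl
        refine ⟨h1, h2, ?_⟩
        rwa [hcl a h1, hcl b h2]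
  have hn : ∀ i, (D.snoc C w).len ≤ i → (D.snoc C w).just i = none := by
    intro i hi
    have h : D.len < i := hi
    rw [← hD.just_none i h.le]
    simp [DagDeriv.snoc, Function.update_of_ne h.ne']
  have huse : ∀ i < D.len, ∀ x, (D.snoc C w).usesVar i x ↔ D.usesVar i x := fun i hi x =>
    ⟨usesVar_of_agree (fun _ _ => lt_of_prem hok hn) (fun i hi => (hag i hi).symm) hi,
      usesVar_of_agree (fun _ _ => lt_of_prem hD.ok hD.just_none) hag hi⟩
  refine ⟨⟨hok, regular_iff.mpr ?_, hn⟩, ?_, huse⟩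
  · intro i a b x hj
    rcases lt_trichotomy i D.len with h | rfl | h
    · rw [← hag i h] at hj
      have hai : a < i := lt_of_prem hD.ok hD.just_none ⟨a, b, x, hj, Or.inl rfl⟩
      have hbi : b < i := lt_of_prem hD.ok hD.just_none ⟨a, b, x, hj, Or.inr rfl⟩
      rw [huse a (hai.trans h), huse b (hbi.trans h)]
      exact regular_iff.mp hD.regular i a b x hj
    · rw [hjl] at hj
      obtain ⟨h1, h2, -, h4⟩ := hsome a b x hj
      rwa [huse a h1, huse b h2]
    · rw [hn i h] at hj
      cases hj
  · rintro C' W ⟨idx, hidx, hC, hW⟩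
    exact ⟨idx, Nat.lt_succ_of_lt hidx, by rw [hcl idx hidx, hC],
      fun x => by rw [huse idx hidx, hW]⟩

theorem Sound.exists_initial {Γ : Set (Clause V)} {D : DagDeriv V} (hD : D.Sound Γ)
    {C : Clause V} (hC : C ∈ Γ) :
    ∃ D' : DagDeriv V, D'.Sound Γ ∧ D'.len = D.len + 1 ∧ D'.Extends D ∧ D'.Derives C ∅ := by
  obtain ⟨h1, h2, -⟩ := hD.snoc (C := C) (w := none) (fun _ => hC) (by simp)
  refine ⟨_, h1, rfl, h2, D.len, Nat.lt_succ_self _, by simp [DagDeriv.snoc], fun x => ?_⟩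
  rw [usesVar_iff]
  simp [DagDeriv.snoc]

theorem Sound.exists_resolvent {Γ : Set (Clause V)} {D : DagDeriv V} (hD : D.Sound Γ)
    {A B C : Clause V} {W W' : Set V} {x : V} (hA : D.Derives A W) (hB : D.Derives B W')
    (hx : x ∉ W) (hx' : x ∉ W') (hC : rstep x A B C) :
    ∃ D' : DagDeriv V, D'.Sound Γ ∧ D'.len = D.len + 1 ∧ D'.Extends D ∧
      D'.Derives C (insert x (W ∪ W')) := by
  obtain ⟨a, ha, rfl, hWa⟩ := hA
  obtain ⟨b, hb, rfl, hWb⟩ := hB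
  obtain ⟨h1, h2, h3⟩ := hD.snoc (C := C) (w := some (a, b, x)) (by simp) (by
    rintro _ _ _ ⟨⟩
    exact ⟨ha, hb, hC, by rwa [hWa], by rwa [hWb]⟩)
  refine ⟨_, h1, rfl, h2, D.len, Nat.lt_succ_self _, by simp [DagDeriv.snoc], fun y => ?_⟩
  have hj : (D.snoc C (some (a, b, x))).just D.len = some (a, b, x) := by
    simp [DagDeriv.snoc]
  rw [usesVar_iff, hj]
  simp [h3 a ha, h3 b hb, hWa, hWb]

end DagDeriv

/-! ### The combinatorics of `S_ℓ^B(C)` -/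

/-- `e` is the largest index of the same colour as `a`. -/
def IsLast (k : ℕ) (J : ℕ → ℕ) (a e : ℕ) : Prop :=
  a ≤ e ∧ e ≤ k ∧ J e = J a ∧ ∀ b ≤ k, J b = J a → b ≤ e

theorem exists_isLast (J : ℕ → ℕ) {k a : ℕ} (ha : a ≤ k) : ∃ e, IsLast k J a e := by
  have hmem : a ∈ (Finset.Icc 0 k).filter fun b => J b = J a := by simp [ha]
  have h := Finset.max'_mem _ ⟨a, hmem⟩
  have hle := Finset.le_max' _ _ hmem
  simp only [Finset.mem_filter, Finset.mem_Icc] at h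
  refine ⟨_, hle, h.1.2, h.2, fun b hb hJ => Finset.le_max' _ _ ?_⟩
  simp [hb, hJ]

namespace IsLast

variable {G : StoneDag} {k : ℕ} {I J : ℕ → ℕ} {a b e x : ℕ}

theorem self (h : IsLast k J a e) : IsLast k J e e := by
  obtain ⟨h1, h2, h3, h4⟩ := h
  exact ⟨le_rfl, h2, rfl, fun b hb hJ => h4 b hb (hJ.trans h3)⟩

theorem not_bypassed (h : IsLast k J e e) : ¬ bypassed k J e := by
  rintro ⟨b, hb, hk, hJ⟩
  exact absurd (h.2.2.2 b hk hJ) (by omega)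

theorem of_not_bypassed (ha : a ≤ k) (h : ¬ bypassed k J a) : IsLast k J a a :=
  ⟨le_rfl, ha, rfl, fun b hb hJ => by
    by_contra hab
    exact h ⟨b, by omega, hb, hJ⟩⟩

theorem maxByp_of_ne (h : IsLast k J a e) (hne : a ≠ e) : maxByp k J a e :=
  ⟨lt_of_le_of_ne h.1 hne, h.2.1, h.2.2.1, fun b _ hb hJ => h.2.2.2 b hb hJ⟩

theorem eq_of_maxByp (h : IsLast k J a e) (hb : maxByp k J a b) : b = e := by
  obtain ⟨h1, h2, h3, h4⟩ := hb
  have h5 := h.2.2.2 b h2 h3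
  exact le_antisymm h5 (h4 e (by omega) h.2.1 h.2.2.1)

theorem eq_of_color_eq {a' e' : ℕ} (h : IsLast k J a e) (h' : IsLast k J a' e')
    (hJ : J a = J a') : e = e' :=
  le_antisymm (h'.2.2.2 e h.2.1 (h.2.2.1.trans hJ)) (h.2.2.2 e' h'.2.1 (h'.2.2.1.trans hJ.symm))

theorem bplus_iff (h : IsLast k J a e) (ha : 1 ≤ a) : Bplus G k I J a ↔ Bidx G k I J e := by
  constructor
  · rintro (hB | ⟨-, -, b, hb, hB⟩)
    · rwa [h.eq_of_color_eq (of_not_bypassed hB.2.1 hB.2.2.1) rfl]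
    · rwa [← h.eq_of_maxByp hb]
  · intro hB
    by_cases hae : a = e
    · exact Or.inl (hae ▸ hB)
    · exact Or.inr ⟨ha, h.1.trans h.2.1, e, h.maxByp_of_ne hae, hB⟩

end IsLast

/-- Edges inside `dom(C)` increase indices. -/
def PredIncr (G : StoneDag) (k : ℕ) (I : ℕ → ℕ) : Prop :=
  ∀ a b, 1 ≤ a → a ≤ k → 1 ≤ b → b ≤ k → (I b = G.p1 (I a) ∨ I b = G.p2 (I a)) → a < b

namespace SBmem

variable {G : StoneDag} {k : ℕ} {I J : ℕ → ℕ} {a e l x y : ℕ}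

theorem trans (h : SBmem G k I J l a) (ha : ¬ Bidx G k I J a) (hx : SBmem G k I J a x) :
    SBmem G k I J l x := by
  induction hx with
  | base => exact h
  | byp c d _ hc hm hd ih =>
    exact .byp c d ih (Or.inr (by rcases hc with rfl | hc <;> assumption)) hm hd
  | pred c d _ hc hb h1 h2 hI ih =>
    exact .pred c d ih (Or.inr (by rcases hc with rfl | hc <;> assumption)) hb h1 h2 hI

theorem bounds (hG : PredIncr G k I) (h1 : 1 ≤ a) (h2 : a ≤ k) (hx : SBmem G k I J a x) :
    a ≤ x ∧ x ≤ k := by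
  induction hx with
  | base => exact ⟨le_rfl, h2⟩
  | byp c d _ _ hm _ ih => exact ⟨ih.1.trans hm.1.le, hm.2.1⟩
  | pred c d _ _ _ hd1 hd2 hI ih =>
    exact ⟨ih.1.trans (hG c d (h1.trans ih.1) ih.2 hd1 hd2 hI).le, hd2⟩

theorem iff_of_isLast (h : IsLast k J a e) (ha : ¬ Bidx G k I J a) :
    SBmem G k I J a x ↔ x = a ∨ (¬ Bidx G k I J e ∧ SBmem G k I J e x) := by
  constructor
  · intro hx
    induction hx with
    | base => exact Or.inl rfl
    | byp c d _ hc hm hd ih =>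
      right
      rcases ih with rfl | ⟨he, ih⟩
      · obtain rfl := h.eq_of_maxByp hm
        exact ⟨hd, .base⟩
      · exact ⟨he, .byp c d ih (Or.inr (by rcases hc with rfl | hc <;> assumption)) hm hd⟩
    | pred c d _ hc hb h1 h2 hI ih =>
      right
      have hcB : ¬ Bidx G k I J c := by rcases hc with rfl | hc <;> assumption
      rcases ih with rfl | ⟨he, ih⟩
      · obtain rfl := h.eq_of_color_eq (.of_not_bypassed (h.1.trans h.2.1) hb) rfl
        exact ⟨hcB, .pred _ d .base (Or.inl rfl) hb h1 h2 hI⟩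
      · exact ⟨he, .pred c d ih (Or.inr hcB) hb h1 h2 hI⟩
  · rintro (rfl | ⟨he, hx⟩)
    · exact .base
    · refine trans ?_ he hx
      by_cases hae : a = e
      · exact hae ▸ .base
      · exact .byp a e .base (Or.inl rfl) (h.maxByp_of_ne hae) he

theorem iff_of_preds (hl : ¬ bypassed k J l) (hlB : ¬ Bidx G k I J l) {a₁ a₂ e₁ e₂ : ℕ}
    (hinj : ∀ b, 1 ≤ b → b ≤ k →
      ((I b = G.p1 (I l) ∨ I b = G.p2 (I l)) ↔ (b = a₁ ∨ b = a₂)))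
    (h₁ : IsLast k J a₁ e₁) (h₂ : IsLast k J a₂ e₂) (ha₁ : 1 ≤ a₁) (ha₂ : 1 ≤ a₂) :
    SBmem G k I J l x ↔ x = l ∨ x = a₁ ∨ x = a₂ ∨ (¬ Bidx G k I J e₁ ∧ SBmem G k I J e₁ x) ∨
      (¬ Bidx G k I J e₂ ∧ SBmem G k I J e₂ x) := by
  have hstep : ∀ {a e c d : ℕ}, IsLast k J a e → c = a ∨ (¬ Bidx G k I J e ∧ SBmem G k I J e c) →
      ¬ Bidx G k I J c → SBmem G k I J c d → d = c ∨ (¬ Bidx G k I J e ∧ SBmem G k I J e d) := by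
    rintro a e c d h (rfl | ⟨he, hc⟩) hcB hd
    · exact (iff_of_isLast h hcB).1 hd
    · exact Or.inr ⟨he, hc.trans hcB hd⟩
  constructor
  · intro hx
    have key : ∀ {c d}, c ≠ l → (c = l ∨ c = a₁ ∨ c = a₂ ∨
        (¬ Bidx G k I J e₁ ∧ SBmem G k I J e₁ c) ∨ (¬ Bidx G k I J e₂ ∧ SBmem G k I J e₂ c)) →
        ¬ Bidx G k I J c → SBmem G k I J c d → d = c ∨
        (¬ Bidx G k I J e₁ ∧ SBmem G k I J e₁ d) ∨ (¬ Bidx G k I J e₂ ∧ SBmem G k I J e₂ d) := by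
      intro c d hcl hc hcB hd
      rcases hc with rfl | hc | hc | hc | hc
      · exact absurd rfl hcl
      · exact (hstep h₁ (Or.inl hc) hcB hd).imp_right Or.inl
      · exact (hstep h₂ (Or.inl hc) hcB hd).imp_right Or.inr
      · exact (hstep h₁ (Or.inr hc) hcB hd).imp_right Or.inl
      · exact (hstep h₂ (Or.inr hc) hcB hd).imp_right Or.inr
    induction hx with
    | base => exact Or.inl rfl
    | byp c d _ hc hm hd ih =>
      have hcl : c ≠ l := by
        rintro rfl
        exact hl ⟨d, hm.1, hm.2.1, hm.2.2.1⟩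
      have hcB : ¬ Bidx G k I J c := hc.resolve_left hcl
      rcases key hcl ih hcB (.byp c d .base (Or.inl rfl) hm hd) with rfl | h
      · exact ih
      · exact Or.inr (Or.inr (Or.inr h))
    | pred c d _ hc hb hd1 hd2 hI ih =>
      by_cases hcl : c = l
      · subst hcl
        rcases (hinj d hd1 hd2).1 hI with h | h
        · exact Or.inr (Or.inl h)
        · exact Or.inr (Or.inr (Or.inl h))
      · have hcB : ¬ Bidx G k I J c := hc.resolve_left hcl
        rcases key hcl ih hcB (.pred c d .base (Or.inl rfl) hb hd1 hd2 hI) with rfl | h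
        · exact ih
        · exact Or.inr (Or.inr (Or.inr h))
  · have hpred : ∀ {a e : ℕ}, IsLast k J a e → 1 ≤ a → a = a₁ ∨ a = a₂ →
        SBmem G k I J l a ∧ (¬ Bidx G k I J e → SBmem G k I J e x → SBmem G k I J l x) := by
      intro a e h ha hor
      have hla : SBmem G k I J l a :=
        .pred l a .base (Or.inl rfl) hl ha (h.1.trans h.2.1) ((hinj a ha (h.1.trans h.2.1)).2 hor)
      refine ⟨hla, fun he hx => ?_⟩
      have haB : ¬ Bidx G k I J a := fun hB => he ((h.bplus_iff ha).1 (Or.inl hB))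
      exact hla.trans haB ((iff_of_isLast h haB).2 (Or.inr ⟨he, hx⟩))
    rintro (rfl | rfl | rfl | ⟨he, hx⟩ | ⟨he, hx⟩)
    · exact .base
    · exact (hpred h₁ ha₁ (Or.inl rfl)).1
    · exact (hpred h₂ ha₂ (Or.inr rfl)).1
    · exact (hpred h₁ ha₁ (Or.inl rfl)).2 he hx
    · exact (hpred h₂ ha₂ (Or.inr rfl)).2 he hx

end SBmem

/-! ### The derived clauses -/

/-- The clause with literals `¬p_{i_x,j_x}` for `x ∈ X`, `¬r_y` for `y ∈ Y`, and `r_j`. -/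
def stoneCl (I J : ℕ → ℕ) (X Y : Finset ℕ) (j : ℕ) : Clause SV :=
  X.image (fun x => ((SV.p (I x) (J x), false) : Lit SV)) ∪
    Y.image (fun y => ((SV.r y, false) : Lit SV)) ∪ {(SV.r j, true)}

/-- `S_ℓ^B(C)` as a set of indices. -/
noncomputable def suppIdx (G : StoneDag) (k : ℕ) (I J : ℕ → ℕ) (l : ℕ) : Finset ℕ :=
  (Finset.Icc 1 k).filter fun a => SBmem G k I J l a

/-- The colours of the elements of `S_ℓ^B(C) ∩ B⁺`. -/
noncomputable def negColors (G : StoneDag) (k : ℕ) (I J : ℕ → ℕ) (l : ℕ) : Finset ℕ :=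
  ((suppIdx G k I J l).filter fun a => Bplus G k I J a).image J

/-- The colours other than `j_ℓ` of the elements of `S_ℓ^B(C) ∖ B⁺`. -/
def resColors (G : StoneDag) (k : ℕ) (I J : ℕ → ℕ) (l : ℕ) : Set ℕ :=
  {j | ∃ x ∈ suppIdx G k I J l, ¬ Bplus G k I J x ∧ J x ≠ J l ∧ J x = j}

theorem rstep_stoneCl (I J : ℕ → ℕ) {X Y X' Y' : Finset ℕ} {j j' : ℕ} (hj : j' ∈ Y) :
    rstep (SV.r j') (stoneCl I J X' Y' j') (stoneCl I J X Y j)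
      (stoneCl I J (X ∪ X') (Y.erase j' ∪ Y') j) := by
  refine ⟨by simp [stoneCl], by simp [stoneCl, hj], ?_⟩
  ext ⟨v, s⟩
  cases v <;> cases s <;> simp [stoneCl, wres] <;> grind

section

variable {G : StoneDag} {k : ℕ} {I J : ℕ → ℕ}

theorem GoodC.vertex_bounds {m a : ℕ} (hC : GoodC G m k I J) (h1 : 1 ≤ a) (h2 : a ≤ k) :
    1 ≤ I a ∧ I a ≤ G.n := by
  obtain ⟨-, hI1, hIk, hmono, -, -⟩ := hC
  constructor
  · rcases h1.eq_or_lt with rfl | h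
    · exact hI1.ge
    · exact hI1.ge.trans (hmono 1 a le_rfl h h2).le
  · rcases h2.eq_or_lt with rfl | h
    · exact hIk
    · exact (hmono a k h1 h le_rfl).le.trans hIk

theorem GoodC.predIncr {m : ℕ} (hC : GoodC G m k I J) : PredIncr G k I := by
  intro a b ha1 hak hb1 hbk hI
  obtain ⟨h1, h2⟩ := hC.vertex_bounds ha1 hak
  have hlt : I a < I b := by
    rcases hI with h | h <;> rw [h]
    · exact G.p1_gt _ h1 h2
    · exact G.p2_gt _ h1 h2
  by_contra hab
  rcases (not_lt.mp hab).eq_or_lt with rfl | h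
  · exact lt_irrefl _ hlt
  · exact lt_asymm hlt (hC.2.2.2.1 b a hb1 h hak)

theorem clc_union_elc_eq (hG : PredIncr G k I) {a e : ℕ} (h : IsLast k J a e) (ha : 1 ≤ a)
    (haB : ¬ Bplus G k I J a) :
    Clc G k I J a ∪ Elc G k I J a ∪ {(SV.r (J a), true)} =
      stoneCl I J (suppIdx G k I J e) (negColors G k I J e) (J e) := by
  have haB' : ¬ Bidx G k I J a := fun hB => haB (Or.inl hB)
  have he : ¬ Bidx G k I J e := fun hB => haB ((h.bplus_iff ha).2 hB)
  have hS : ∀ x, SBmem G k I J a x ↔ x = a ∨ SBmem G k I J e x := fun x => by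
    rw [SBmem.iff_of_isLast h haB']; simp [he]
  have hlow : ∀ x, SBmem G k I J e x → e ≤ x := fun x hx =>
    (hx.bounds hG (ha.trans h.1) h.2.1).1
  have hC : ((Finset.Icc 1 k).filter fun x => SBmem G k I J a x ∧ ¬(x = a ∧ bypassed k J a)) =
      suppIdx G k I J e := by
    ext x
    simp only [suppIdx, Finset.mem_filter, hS, and_congr_right_iff]
    intro _
    constructor
    · rintro ⟨rfl | hx, hb⟩
      · rw [h.eq_of_color_eq (.of_not_bypassed (h.1.trans h.2.1) fun h' => hb ⟨rfl, h'⟩) rfl]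
        exact .base
      · exact hx
    · refine fun hx => ⟨Or.inr hx, ?_⟩
      rintro ⟨rfl, hb⟩
      obtain rfl := le_antisymm h.1 (hlow _ hx)
      exact h.not_bypassed hb
  have hE : ((Finset.Icc 1 k).filter fun x => SBmem G k I J a x ∧ Bplus G k I J x ∧
      (Bidx G k I J a → x ≠ a)) = (suppIdx G k I J e).filter fun x => Bplus G k I J x := by
    ext x
    simp only [suppIdx, Finset.mem_filter, hS]
    grind
  rw [Clc, Elc, hC, hE, stoneCl, negColors, Finset.image_image, h.2.2.1]
  rfl

theorem mem_resColors_iff {a e : ℕ} (h : IsLast k J a e) (ha : 1 ≤ a)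
    (haB : ¬ Bplus G k I J a) (x : SV) :
    x ∈ SV.r '' resColors G k I J e ↔ ∃ l, 1 ≤ l ∧ l ≤ k ∧ x = SV.r (J l) ∧ J l ≠ J a ∧
      SBmem G k I J a l ∧ ¬ Bplus G k I J l := by
  have haB' : ¬ Bidx G k I J a := fun hB => haB (Or.inl hB)
  have he : ¬ Bidx G k I J e := fun hB => haB ((h.bplus_iff ha).2 hB)
  have hJ := h.2.2.1
  simp only [resColors, suppIdx, Set.mem_image, Set.mem_ofPred_eq, Finset.mem_filter,
    Finset.mem_Icc, SBmem.iff_of_isLast h haB', hJ]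
  constructor
  · rintro ⟨_, ⟨l, ⟨⟨h1, h2⟩, h3⟩, h4, h5, rfl⟩, rfl⟩
    exact ⟨l, h1, h2, rfl, h5, Or.inr ⟨he, h3⟩, h4⟩
  · rintro ⟨l, h1, h2, rfl, h5, rfl | ⟨-, h3⟩, h4⟩
    · exact absurd rfl h5
    · exact ⟨_, ⟨l, ⟨⟨h1, h2⟩, h3⟩, h4, h5, rfl⟩, rfl⟩

theorem not_mem_negColors {e e' : ℕ} (h : IsLast k J e e) (he : ¬ Bidx G k I J e) :
    J e ∉ negColors G k I J e' := by
  simp only [negColors, suppIdx, Finset.mem_image, Finset.mem_filter, Finset.mem_Icc]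
  rintro ⟨x, ⟨⟨⟨h1, h2⟩, -⟩, hB⟩, hJ⟩
  obtain ⟨f, hf⟩ := exists_isLast J h2
  rw [hf.bplus_iff h1, hf.eq_of_color_eq h hJ] at hB
  exact he hB

theorem not_mem_resColors_of_lt (hG : PredIncr G k I) {e e' : ℕ} (h : IsLast k J e e)
    (h' : 1 ≤ e') (hk : e' ≤ k) (hlt : e < e') : J e ∉ resColors G k I J e' := by
  simp only [resColors, suppIdx, Set.mem_ofPred_eq, Finset.mem_filter, Finset.mem_Icc]
  rintro ⟨x, ⟨⟨-, h2⟩, hx⟩, -, -, hJ⟩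
  have := (hx.bounds hG h' hk).1
  have := h.2.2.2 x h2 hJ
  omega

/-- Resolve on `r_{j_e}` if `i_e ∉ B`, and do nothing otherwise. -/
theorem exists_resolvent_of_not_bidx {Γ : Set (Clause SV)} {D : DagDeriv SV} (hD : D.Sound Γ)
    {X Y : Finset ℕ} {W : Set ℕ} {j e : ℕ} (hB : D.Derives (stoneCl I J X Y j) (SV.r '' W))
    (he : ¬ Bidx G k I J e → D.Derives (stoneCl I J (suppIdx G k I J e) (negColors G k I J e) (J e))
      (SV.r '' resColors G k I J e)) (hY : J e ∈ Y) (hW : J e ∉ W) :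
    ∃ D' : DagDeriv SV, D'.Sound Γ ∧ D'.len ≤ D.len + 1 ∧ D'.Extends D ∧
      D'.Derives (stoneCl I J (if Bidx G k I J e then X else X ∪ suppIdx G k I J e)
        (if Bidx G k I J e then Y else Y.erase (J e) ∪ negColors G k I J e) j)
        (SV.r '' (if Bidx G k I J e then W else insert (J e) (resColors G k I J e ∪ W))) := by
  by_cases hb : Bidx G k I J e
  · exact ⟨D, hD, by omega, fun _ _ h => h, by simpa [hb] using hB⟩
  · obtain ⟨D', h1, h2, h3, h4⟩ := hD.exists_resolvent (he hb) hB
      (x := SV.r (J e)) (by simp [resColors]) (by simpa using hW) (rstep_stoneCl I J hY)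
    exact ⟨D', h1, h2.le, h3, by simpa [hb, Set.image_insert_eq, Set.image_union] using h4⟩

/-- Derive the clause of a non-bypassed vertex outside `B` from the clauses of its predecessors. -/
theorem exists_extend_of_preds {Γ : Set (Clause SV)} {D : DagDeriv SV} (hD : D.Sound Γ)
    (hG : PredIncr G k I) {l a₁ a₂ e₁ e₂ : ℕ} (hl1 : 1 ≤ l)
    (hl : IsLast k J l l) (hlB : ¬ Bidx G k I J l)
    (hinj : ∀ b, 1 ≤ b → b ≤ k →
      ((I b = G.p1 (I l) ∨ I b = G.p2 (I l)) ↔ (b = a₁ ∨ b = a₂)))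
    (h₁ : IsLast k J a₁ e₁) (h₂ : IsLast k J a₂ e₂) (hl₁ : l < a₁) (hl₂ : l < a₂)
    (hΓ : stoneCl I J {l, a₁, a₂} {J a₁, J a₂} (J l) ∈ Γ)
    (he : ∀ e, e = e₁ ∨ e = e₂ → ¬ Bidx G k I J e →
      D.Derives (stoneCl I J (suppIdx G k I J e) (negColors G k I J e) (J e))
        (SV.r '' resColors G k I J e)) :
    ∃ D' : DagDeriv SV, D'.Sound Γ ∧ D'.len ≤ D.len + 3 ∧ D'.Extends D ∧
      D'.Derives (stoneCl I J (suppIdx G k I J l) (negColors G k I J l) (J l))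
        (SV.r '' resColors G k I J l) := by
  wlog hle : e₁ ≤ e₂ generalizing a₁ a₂ e₁ e₂
  · refine this (fun b h1 h2 => (hinj b h1 h2).trans or_comm) h₂ h₁ hl₂ hl₁ ?_
      (fun e h => he e h.symm) (by omega)
    rwa [Finset.pair_comm a₂ a₁, Finset.pair_comm (J a₂) (J a₁)]
  have hB₁ : Bplus G k I J a₁ ↔ Bidx G k I J e₁ := h₁.bplus_iff (by omega)
  have hB₂ : Bplus G k I J a₂ ↔ Bidx G k I J e₂ := h₂.bplus_iff (by omega)
  have hBl : ¬ Bplus G k I J l := fun h => hlB ((hl.bplus_iff hl1).1 h)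
  have hS : ∀ x, x ∈ suppIdx G k I J l ↔ x = l ∨ x = a₁ ∨ x = a₂ ∨
      (¬ Bidx G k I J e₁ ∧ x ∈ suppIdx G k I J e₁) ∨
      (¬ Bidx G k I J e₂ ∧ x ∈ suppIdx G k I J e₂) := by
    intro x
    have := h₁.1
    have := h₁.2.1
    have := h₂.1
    have := h₂.2.1
    simp only [suppIdx, Finset.mem_filter, Finset.mem_Icc]
    rw [SBmem.iff_of_preds hl.not_bypassed hlB hinj h₁ h₂ (by omega) (by omega)]
    constructor
    · rintro ⟨hx, h⟩
      simpa only [hx, true_and] using h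
    · rintro (rfl | rfl | rfl | ⟨h, hx, h'⟩ | ⟨h, hx, h'⟩)
      · exact ⟨⟨hl1, hl.2.1⟩, Or.inl rfl⟩
      · exact ⟨by omega, by tauto⟩
      · exact ⟨by omega, by tauto⟩
      · exact ⟨hx, by tauto⟩
      · exact ⟨hx, by tauto⟩
  have hY : ∀ j, j ∈ negColors G k I J l ↔ (Bidx G k I J e₁ ∧ j = J a₁) ∨
      (Bidx G k I J e₂ ∧ j = J a₂) ∨ (¬ Bidx G k I J e₁ ∧ j ∈ negColors G k I J e₁) ∨
      (¬ Bidx G k I J e₂ ∧ j ∈ negColors G k I J e₂) := by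
    intro j
    simp only [negColors, Finset.mem_image, Finset.mem_filter, hS]
    constructor
    · rintro ⟨x, ⟨rfl | rfl | rfl | ⟨h, hx⟩ | ⟨h, hx⟩, hB⟩, rfl⟩
      · exact absurd hB hBl
      · exact Or.inl ⟨hB₁.1 hB, rfl⟩
      · exact Or.inr (Or.inl ⟨hB₂.1 hB, rfl⟩)
      · exact Or.inr (Or.inr (Or.inl ⟨h, x, ⟨hx, hB⟩, rfl⟩))
      · exact Or.inr (Or.inr (Or.inr ⟨h, x, ⟨hx, hB⟩, rfl⟩))
    · rintro (⟨h, rfl⟩ | ⟨h, rfl⟩ | ⟨h, x, ⟨hx, hB⟩, rfl⟩ | ⟨h, x, ⟨hx, hB⟩, rfl⟩)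
      · exact ⟨a₁, ⟨by tauto, hB₁.2 h⟩, rfl⟩
      · exact ⟨a₂, ⟨by tauto, hB₂.2 h⟩, rfl⟩
      · exact ⟨x, ⟨by tauto, hB⟩, rfl⟩
      · exact ⟨x, ⟨by tauto, hB⟩, rfl⟩
  have hcol : ∀ e x, l < e → e ≤ k → x ∈ suppIdx G k I J e → J x ≠ J l := by
    intro e x hle hek hx hJ
    simp only [suppIdx, Finset.mem_filter, Finset.mem_Icc] at hx
    have := (hx.2.bounds hG (by omega) hek).1
    have := hl.2.2.2 x hx.1.2 hJ
    omega
  have hW : ∀ j, j ∈ resColors G k I J l ↔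
      (¬ Bidx G k I J e₁ ∧ (j = J e₁ ∨ j ∈ resColors G k I J e₁)) ∨
      (¬ Bidx G k I J e₂ ∧ (j = J e₂ ∨ j ∈ resColors G k I J e₂)) := by
    intro j
    have hle₁ : l < e₁ := hl₁.trans_le h₁.1
    have hle₂ : l < e₂ := hl₂.trans_le h₂.1
    have hJ₁ : J a₁ ≠ J l := fun h => absurd (hl.2.2.2 a₁ (h₁.1.trans h₁.2.1) h) (by omega)
    have hJ₂ : J a₂ ≠ J l := fun h => absurd (hl.2.2.2 a₂ (h₂.1.trans h₂.2.1) h) (by omega)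
    have hc₁ := fun x => hcol e₁ x hle₁ h₁.2.1
    have hc₂ := fun x => hcol e₂ x hle₂ h₂.2.1
    have hj₁ := h₁.2.2.1
    have hj₂ := h₂.2.2.1
    simp only [resColors, Set.mem_ofPred_eq, hS]
    constructor
    · rintro ⟨x, rfl | rfl | rfl | ⟨h, hx⟩ | ⟨h, hx⟩, hB, hJ, rfl⟩
      · exact absurd rfl hJ
      · exact Or.inl ⟨fun h => hB (hB₁.2 h), Or.inl hj₁.symm⟩
      · exact Or.inr ⟨fun h => hB (hB₂.2 h), Or.inl hj₂.symm⟩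
      · exact Or.inl ⟨h, or_iff_not_imp_left.2 fun hne => ⟨x, hx, hB, hne, rfl⟩⟩
      · exact Or.inr ⟨h, or_iff_not_imp_left.2 fun hne => ⟨x, hx, hB, hne, rfl⟩⟩
    · rintro (⟨h, rfl | ⟨x, hx, hB, -, rfl⟩⟩ | ⟨h, rfl | ⟨x, hx, hB, -, rfl⟩⟩)
      · exact ⟨a₁, by tauto, fun hB => h (hB₁.1 hB), hJ₁, hj₁.symm⟩
      · exact ⟨x, by tauto, hB, hc₁ x hx, rfl⟩
      · exact ⟨a₂, by tauto, fun hB => h (hB₂.1 hB), hJ₂, hj₂.symm⟩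
      · exact ⟨x, by tauto, hB, hc₂ x hx, rfl⟩
  obtain ⟨D₀, hs₀, hlen₀, hext₀, hd₀⟩ := hD.exists_initial hΓ
  have hd₀' : D₀.Derives (stoneCl I J {l, a₁, a₂} {J a₁, J a₂} (J l)) (SV.r '' ∅) := by
    simpa using hd₀
  obtain ⟨D₁, hs₁, hlen₁, hext₁, hd₁⟩ := exists_resolvent_of_not_bidx hs₀ hd₀' (e := e₂)
    (fun h => hext₀ _ _ (he e₂ (Or.inr rfl) h)) (by simp [h₂.2.2.1]) (by simp)
  clear hinj hΓ hcol hd₀ hd₀'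
  rcases hle.eq_or_lt with rfl | hlt
  · have hJ : J a₁ = J a₂ := h₁.2.2.1.symm.trans h₂.2.2.1
    refine ⟨D₁, hs₁, by omega, fun C W h => hext₁ _ _ (hext₀ _ _ h), ?_⟩
    convert hd₁ using 2
    · ext x
      simp only [hS]
      split_ifs <;> simp <;> grind
    · ext j
      have hJe := h₁.2.2.1
      simp only [hY]
      split_ifs <;> simp <;> grind
    · ext j
      simp only [hW]
      split_ifs <;> simp <;> grind
  · have hne : J e₁ ≠ J e₂ := fun h => absurd (h₁.self.eq_of_color_eq h₂.self h) hlt.ne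
    have hJ₁ := h₁.2.2.1
    have hJ₂ := h₂.2.2.1
    have hres : J e₁ ∉ resColors G k I J e₂ :=
      not_mem_resColors_of_lt hG h₁.self (by have := h₂.1; omega) h₂.2.1 hlt
    obtain ⟨D₂, hs₂, hlen₂, hext₂, hd₂⟩ := exists_resolvent_of_not_bidx hs₁ hd₁ (e := e₁)
      (fun h => hext₁ _ _ (hext₀ _ _ (he e₁ (Or.inl rfl) h)))
      (by split_ifs <;> simp [hJ₁.symm] <;> grind) (by split_ifs <;> simp [hne, hres])
    refine ⟨D₂, hs₂, by omega, fun C W h => hext₂ _ _ (hext₁ _ _ (hext₀ _ _ h)), ?_⟩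
    have hn₁ : ¬ Bidx G k I J e₁ → J e₁ ∉ negColors G k I J e₂ := not_mem_negColors h₁.self
    convert hd₂ using 2
    · ext x
      simp only [hS]
      split_ifs <;> simp <;> grind
    · ext j
      simp only [hY]
      split_ifs <;> simp <;> grind
    · ext j
      simp only [hW]
      split_ifs <;> simp <;> grind

/-- All clauses for the final indices `e ≥ u` in `S_s^B(C) ∖ B`, derived in linear size. -/
theorem exists_derivation {m : ℕ} (hC : GoodC G m k I J) (s u : ℕ) (hu : 1 ≤ u) :
    ∃ D : DagDeriv SV, D.Sound (stoneClauses G m) ∧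
      D.len ≤ 3 * ((Finset.Icc u k).filter fun a => SBmem G k I J s a).card ∧
      ∀ e, u ≤ e → IsLast k J e e → SBmem G k I J s e → ¬ Bidx G k I J e →
        D.Derives (stoneCl I J (suppIdx G k I J e) (negColors G k I J e) (J e))
          (SV.r '' resColors G k I J e) := by
  have hG := hC.predIncr
  obtain ⟨-, -, -, hmono, hJ, -⟩ := id hC
  induction hn : k + 1 - u generalizing u with
  | zero =>
    refine ⟨⟨0, fun _ => ∅, fun _ => none⟩, ⟨fun i hi => absurd hi (Nat.not_lt_zero i),
      fun i a b x h => by simp at h, fun _ _ => rfl⟩, Nat.zero_le _, fun e hue he => ?_⟩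
    have := he.2.1
    omega
  | succ n ih =>
    obtain ⟨D, hD, hlen, hder⟩ := ih (u + 1) (by omega) (by omega)
    have hsub : (Finset.Icc (u + 1) k).filter (fun a => SBmem G k I J s a) ⊆
        (Finset.Icc u k).filter fun a => SBmem G k I J s a :=
      Finset.filter_subset_filter _ (Finset.Icc_subset_Icc_left (by omega))
    by_cases hnew : IsLast k J u u ∧ SBmem G k I J s u ∧ ¬ Bidx G k I J u
    · obtain ⟨hlast, hsu, huB⟩ := hnew
      have hcard : ((Finset.Icc (u + 1) k).filter fun a => SBmem G k I J s a).card + 1 ≤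
          ((Finset.Icc u k).filter fun a => SBmem G k I J s a).card := by
        refine Finset.card_lt_card ⟨hsub, fun h => ?_⟩
        have : u ∈ (Finset.Icc (u + 1) k).filter fun a => SBmem G k I J s a :=
          h (by simp [hsu, hlast.2.1])
        simp at this
      have hb := hlast.not_bypassed
      have hdom : G.p1 (I u) ∈ domv k I ∧ G.p2 (I u) ∈ domv k I := by
        by_contra h
        exact huB ⟨hu, hlast.2.1, hb, by tauto⟩
      obtain ⟨⟨a₁, ha₁, ha₁k, hI₁⟩, ⟨a₂, ha₂, ha₂k, hI₂⟩⟩ := hdom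
      have hl₁ : u < a₁ := hG u a₁ hu hlast.2.1 ha₁ ha₁k (Or.inl hI₁)
      have hl₂ : u < a₂ := hG u a₂ hu hlast.2.1 ha₂ ha₂k (Or.inr hI₂)
      have hIinj : ∀ a b, 1 ≤ a → a ≤ k → 1 ≤ b → b ≤ k → (I a = I b ↔ a = b) := by
        refine fun a b h1 h2 h3 h4 => ⟨fun h => ?_, fun h => h ▸ rfl⟩
        rcases lt_trichotomy a b with hab | hab | hab
        · exact absurd h (hmono a b h1 hab h4).ne
        · exact hab
        · exact absurd h (hmono b a h3 hab h2).ne'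
      have hinj : ∀ b, 1 ≤ b → b ≤ k →
          ((I b = G.p1 (I u) ∨ I b = G.p2 (I u)) ↔ (b = a₁ ∨ b = a₂)) := fun b h1 h2 => by
        rw [← hI₁, ← hI₂, hIinj b a₁ h1 h2 ha₁ ha₁k, hIinj b a₂ h1 h2 ha₂ ha₂k]
      obtain ⟨e₁, h₁⟩ := exists_isLast J ha₁k
      obtain ⟨e₂, h₂⟩ := exists_isLast J ha₂k
      have hΓ : stoneCl I J {u, a₁, a₂} {J a₁, J a₂} (J u) ∈ stoneClauses G m := by
        obtain ⟨hIu1, hIun⟩ := hC.vertex_bounds hu hlast.2.1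
        refine Or.inr ⟨I u, J u, J a₁, J a₂, hIu1, hIun, (hJ u hu hlast.2.1).1,
          (hJ u hu hlast.2.1).2, (hJ a₁ ha₁ ha₁k).1, (hJ a₁ ha₁ ha₁k).2, (hJ a₂ ha₂ ha₂k).1,
          (hJ a₂ ha₂ ha₂k).2, fun h => hb ⟨a₁, hl₁, ha₁k, h.symm⟩,
          fun h => hb ⟨a₂, hl₂, ha₂k, h.symm⟩, ?_⟩
        ext x
        simp only [stoneCl, ← hI₁, ← hI₂, Finset.mem_union, Finset.mem_image, Finset.mem_insert,
          Finset.mem_singleton, exists_eq_or_imp, exists_eq_left]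
        tauto
      obtain ⟨D', hD', hlen', hext, hder'⟩ := exists_extend_of_preds hD hG hu hlast huB hinj h₁ h₂
        hl₁ hl₂ hΓ (by
          intro e hee heB
          have hS := @SBmem.iff_of_preds G k I J u e hb huB a₁ a₂ e₁ e₂ hinj h₁ h₂ ha₁ ha₂
          rcases hee with rfl | rfl
          · exact hder e (by have := h₁.1; omega) h₁.self
              (hsu.trans huB (hS.2 (by simp [heB, SBmem.base]))) heB
          · exact hder e (by have := h₂.1; omega) h₂.self
              (hsu.trans huB (hS.2 (by simp [heB, SBmem.base]))) heB)
      refine ⟨D', hD', by omega, fun e hue hel hse heB => ?_⟩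
      rcases hue.eq_or_lt with rfl | hlt
      · exact hder'
      · exact hext _ _ (hder e hlt hel hse heB)
    · refine ⟨D, hD, hlen.trans (Nat.mul_le_mul_left 3 (Finset.card_le_card hsub)),
        fun e hue hel hse heB => hder e (Nat.lt_of_le_of_ne hue ?_) hel hse heB⟩
      rintro rfl
      exact hnew ⟨hel, hse, heB⟩

end

/-- for `i_{t_q} ∈ B₁ ∪ {1}` with `i_{t_q} ∉ B⁺∖B`, a regular
dag-like derivation of size `O(N_q)` containing every clause `C_ℓ ∨ E_ℓ ∨ r_{j_ℓ}`
for `i_ℓ ∈ S_{t_q}^B(C) ∖ B⁺`, whose subderivation uses exactly the stated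
resolution variables. -/
theorem Lprime_tq : ∃ c : ℕ, ∀ (G : StoneDag) (m k : ℕ) (I J : ℕ → ℕ),
    GoodC G m k I J →
    ∀ (r : ℕ) (t : ℕ → ℕ), EnumB G k I J r t →
    ∀ q, 1 ≤ q → q ≤ r →
    (B1idx G k I J (t q) ∨ t q = 1) →
    ¬ (Bplus G k I J (t q) ∧ ¬ Bidx G k I J (t q)) →
    ∃ D : DagDeriv SV, D.ok (stoneClauses G m) ∧ D.regular ∧
      D.len ≤ c * ((Finset.Icc 1 k).filter fun a => SBmem G k I J (t q) a).card ∧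
      ∀ ℓ, 1 ≤ ℓ → ℓ ≤ k → SBmem G k I J (t q) ℓ → ¬ Bplus G k I J ℓ →
        ∃ idx, idx < D.len ∧
          D.cl idx = Clc G k I J ℓ ∪ Elc G k I J ℓ ∪ {(SV.r (J ℓ), true)} ∧
          ∀ x, D.usesVar idx x ↔
            ∃ ℓ', 1 ≤ ℓ' ∧ ℓ' ≤ k ∧ x = SV.r (J ℓ') ∧ J ℓ' ≠ J ℓ ∧
              SBmem G k I J ℓ ℓ' ∧ ¬ Bplus G k I J ℓ' := by
  refine ⟨3, fun G m k I J hC r t _ q _ _ _ _ => ?_⟩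
  obtain ⟨D, hD, hlen, hder⟩ := exists_derivation hC (t q) 1 le_rfl
  refine ⟨D, hD.ok, hD.regular, hlen, fun l hl1 hlk hl hlB => ?_⟩
  obtain ⟨e, he⟩ := exists_isLast J hlk
  have hlB' : ¬ Bidx G k I J l := fun h => hlB (Or.inl h)
  have heB : ¬ Bidx G k I J e := fun h => hlB ((he.bplus_iff hl1).2 h)
  obtain ⟨idx, hidx, hcl, huse⟩ := hder e (hl1.trans he.1) he.self
    (hl.trans hlB' ((SBmem.iff_of_isLast he hlB').2 (Or.inr ⟨heB, .base⟩))) heB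
  exact ⟨idx, hidx, hcl.trans (clc_union_elc_eq hC.predIncr he hl1 hlB).symm,
    fun x => (huse x).trans (mem_resColors_iff he hl1 hlB x)⟩
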